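/- arXiv:2112.06690 — 2 statements merged into one kernel-verified Lean document; each statement's English description precedes it below -/
import Mathlib

section
/- Let A be a unital C*-algebra, n,m ≥ 1, q ∈ ℂ with |q| < 1, and let v_1,…,v_{n+m} ∈ A satisfy the Cuntz–Toeplitz relations. With Q̃ = Σ_{i=1}^n v_i v_i*, w̃_r = v_{n+r}·((1−Q̃) + (1−|q|²)^{1/2} Q̃), and w_r = Σ_{k≥0} q^k Σ_{μ ∈ {1,…,n}^k} v_μ w̃_r v_μ* (a norm-convergent series), the topological closure of the *-subalgebra of A generated by {v_1,…,v_n, w_1,…,w_m} equals the topological closure of the *-subalgebra of A generated by {v_1,…,v_{n+m}}. -/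
open scoped BigOperators

/-- Product `v_{μ_1} ⋯ v_{μ_k}` associated to a word `μ ∈ {1,…,n}^k`. -/
noncomputable def wordProd {A : Type*} [Monoid A] {n k : ℕ} (s : Fin n → A)
    (μ : Fin k → Fin n) : A :=
  (List.ofFn fun i => s (μ i)).prod

theorem wordProd_cons' {A : Type*} [Monoid A] {n k : ℕ} (s : Fin n → A)
    (i : Fin n) (μ : Fin k → Fin n) :
    wordProd s (Fin.cons i μ : Fin (k + 1) → Fin n) = s i * wordProd s μ := by
  simp [wordProd, List.ofFn_succ]

theorem sum_words_succ {A : Type*} [Ring A] [StarRing A] {n k : ℕ} (s : Fin n → A) (x : A) :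
    ∑ μ : Fin (k + 1) → Fin n, wordProd s μ * x * star (wordProd s μ)
      = ∑ i, s i * (∑ μ : Fin k → Fin n, wordProd s μ * x * star (wordProd s μ)) * star (s i) := by
  rw [← (Fin.consEquiv (fun _ : Fin (k + 1) => Fin n)).sum_comp, Fintype.sum_prod_type]
  refine Finset.sum_congr rfl fun i _ => ?_
  rw [Finset.mul_sum, Finset.sum_mul]
  refine Finset.sum_congr rfl fun μ _ => ?_
  have : (Fin.consEquiv (fun _ : Fin (k + 1) => Fin n)) (i, μ) = (Fin.cons i μ : Fin (k + 1) → Fin n) := rfl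
  rw [this, wordProd_cons', star_mul]
  simp only [mul_assoc]

theorem norm_phi_le {A : Type*} [CStarAlgebra A] {n : ℕ} (s : Fin n → A)
    (hs : ∀ i j, star (s i) * s j = if i = j then 1 else 0) (x : A) :
    ‖∑ i, s i * x * star (s i)‖ ≤ ‖x‖ := by
  let φ : A →⋆ₙₐ[ℂ] A :=
    { toFun := fun x => ∑ i, s i * x * star (s i)
      map_smul' := fun c x => by simp [Finset.smul_sum]
      map_zero' := by simp
      map_add' := fun x y => by simp [mul_add, add_mul, Finset.sum_add_distrib]
      map_mul' := fun x y => by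
        rw [Finset.sum_mul_sum]
        refine Finset.sum_congr rfl fun i _ => ?_
        have : ∀ j, s i * x * star (s i) * (s j * y * star (s j))
            = if i = j then s i * (x * y) * star (s j) else 0 := fun j => by
          have : s i * x * star (s i) * (s j * y * star (s j))
            = s i * x * (star (s i) * s j) * (y * star (s j)) := by simp only [mul_assoc]
          rw [this, hs]
          split_ifs <;> simp [mul_assoc]
        simp [this]
      map_star' := fun x => by simp [star_sum, mul_assoc] }
  exact NonUnitalStarAlgHom.norm_apply_le φ x

theorem stmt_9 {A : Type*} [NormedRing A] [StarRing A] [CStarRing A]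
    [NormedAlgebra ℂ A] [StarModule ℂ A] [CompleteSpace A]
    {n m : ℕ} (hn : 1 ≤ n) (hm : 1 ≤ m) (q : ℂ) (hq : ‖q‖ < 1)
    (v : Fin (n + m) → A)
    (hct : ∀ i j : Fin (n + m), star (v i) * v j = if i = j then 1 else 0)
    (Q : A) (hQ : Q = ∑ i : Fin n, v (Fin.castAdd m i) * star (v (Fin.castAdd m i)))
    (wt : Fin m → A)
    (hwt : ∀ r, wt r = v (Fin.natAdd n r) *
      ((1 - Q) + ((Real.sqrt (1 - ‖q‖ ^ 2) : ℝ) : ℂ) • Q))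
    (f : Fin m → ℕ → A)
    (hf : ∀ r k, f r k = q ^ k • ∑ μ : Fin k → Fin n,
      wordProd (fun i => v (Fin.castAdd m i)) μ * wt r *
        star (wordProd (fun i => v (Fin.castAdd m i)) μ)) :
    (StarAlgebra.adjoin ℂ
        ((Set.range fun i : Fin n => v (Fin.castAdd m i)) ∪
          (Set.range fun r : Fin m => ∑' k, f r k))).topologicalClosure
      = (StarAlgebra.adjoin ℂ (Set.range v)).topologicalClosure := by
  classical
  let _ : CStarAlgebra A := { }
  set s : Fin n → A := fun i => v (Fin.castAdd m i) with hs
  have hss : ∀ i j, star (s i) * s j = if i = j then 1 else 0 := fun i j => by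
    simp [hs, hct, Fin.ext_iff]
  have hf0 : ∀ r, f r 0 = wt r := fun r => by
    rw [hf]; simp [wordProd]
  have hfs : ∀ r k, f r (k + 1) = q • ∑ i, s i * f r k * star (s i) := fun r k => by
    rw [hf, hf, sum_words_succ, pow_succ', mul_smul]
    congr 1
    rw [Finset.smul_sum]
    simp only [mul_smul_comm, smul_mul_assoc]
  have hnorm : ∀ r k, ‖f r k‖ ≤ ‖q‖ ^ k * ‖wt r‖ := fun r k => by
    induction k with
    | zero => simp [hf0]
    | succ k ih =>
      rw [hfs, norm_smul, pow_succ', mul_assoc]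
      exact mul_le_mul_of_nonneg_left ((norm_phi_le s hss _).trans ih) (norm_nonneg _)
  have hsum : ∀ r, Summable (f r) := fun r =>
    Summable.of_norm_bounded ((summable_geometric_of_lt_one (norm_nonneg q) hq).mul_right _)
      (hnorm r)
  have hw : ∀ r, ∑' k, f r k = wt r + q • ∑ i, s i * (∑' k, f r k) * star (s i) := fun r => by
    conv_lhs => rw [(hsum r).tsum_eq_zero_add, hf0]
    congr 1
    simp only [hfs]
    refine HasSum.tsum_eq ?_
    refine HasSum.const_smul q ?_
    exact hasSum_sum fun i _ => ((hsum r).hasSum.mul_left (s i)).mul_right (star (s i))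
  have hQQ : Q * Q = Q := by
    have h1 : ∀ j, Q * s j = s j := fun j => by
      rw [hQ, Finset.sum_mul]
      simp only [mul_assoc]
      change ∑ i, s i * (star (s i) * s j) = s j
      simp [hss]
    conv_lhs => rw [hQ, ← hQ]
    nth_rewrite 2 [hQ]
    rw [Finset.mul_sum]
    conv_rhs => rw [hQ]
    refine Finset.sum_congr rfl fun i _ => ?_
    rw [← mul_assoc]
    exact congrArg (· * _) (h1 i)
  obtain ⟨c, hc⟩ : ∃ c : ℂ, c = ((Real.sqrt (1 - ‖q‖ ^ 2) : ℝ) : ℂ) := ⟨_, rfl⟩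
  have hc0 : c ≠ 0 := by
    rw [hc]
    have : 0 < Real.sqrt (1 - ‖q‖ ^ 2) := Real.sqrt_pos.2 (by nlinarith [norm_nonneg q])
    exact_mod_cast this.ne'
  rw [← hc] at hwt
  have hinv : ((1 - Q) + c • Q) * ((1 - Q) + c⁻¹ • Q) = 1 := by
    simp [mul_add, add_mul, mul_sub, sub_mul, hQQ, smul_smul, hc0]
  have hv : ∀ r, v (Fin.natAdd n r) = wt r * ((1 - Q) + c⁻¹ • Q) := fun r => by
    rw [hwt, mul_assoc, hinv, mul_one]
  apply le_antisymm
  · refine StarSubalgebra.topologicalClosure_minimal ?_ (StarSubalgebra.isClosed_topologicalClosure _)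
    refine StarAlgebra.adjoin_le ?_
    set S := StarAlgebra.adjoin ℂ (Set.range v) with hS
    have hvS : ∀ i, v i ∈ S := fun i => StarAlgebra.subset_adjoin ℂ _ ⟨i, rfl⟩
    have hQS : Q ∈ S := by
      rw [hQ]; exact sum_mem fun i _ => mul_mem (hvS _) (star_mem (hvS _))
    have hwtS : ∀ r, wt r ∈ S := fun r => by
      rw [hwt]
      exact mul_mem (hvS _) (add_mem (sub_mem (one_mem _) hQS) (SMulMemClass.smul_mem _ hQS))
    have hfS : ∀ r k, f r k ∈ S := fun r k => by
      induction k with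
      | zero => rw [hf0]; exact hwtS r
      | succ k ih =>
        rw [hfs]
        exact SMulMemClass.smul_mem _
          (sum_mem fun i _ => mul_mem (mul_mem (hvS _) ih) (star_mem (hvS _)))
    rintro _ (⟨i, rfl⟩ | ⟨r, rfl⟩)
    · exact StarSubalgebra.le_topologicalClosure _ (hvS _)
    · refine (StarSubalgebra.isClosed_topologicalClosure S).mem_of_tendsto (hsum r).hasSum
        (Filter.Eventually.of_forall fun t => ?_)
      exact StarSubalgebra.le_topologicalClosure _ (sum_mem fun k _ => hfS r k)
  · refine StarSubalgebra.topologicalClosure_mono (StarAlgebra.adjoin_le ?_)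
    set S := StarAlgebra.adjoin ℂ ((Set.range s) ∪
          (Set.range fun r : Fin m => ∑' k, f r k)) with hS
    have hsS : ∀ i, s i ∈ S := fun i => StarAlgebra.subset_adjoin ℂ _ (Or.inl ⟨i, rfl⟩)
    have hwS : ∀ r, ∑' k, f r k ∈ S := fun r => StarAlgebra.subset_adjoin ℂ _ (Or.inr ⟨r, rfl⟩)
    have hQS : Q ∈ S := by
      rw [hQ]; exact sum_mem fun i _ => mul_mem (hsS i) (star_mem (hsS i))
    have hwtS : ∀ r, wt r ∈ S := fun r => by
      rw [eq_sub_of_add_eq (hw r).symm]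
      exact sub_mem (hwS r) (SMulMemClass.smul_mem _
          (sum_mem fun i _ => mul_mem (mul_mem (hsS _) (hwS r)) (star_mem (hsS _))))
    rintro _ ⟨j, rfl⟩
    refine Fin.addCases (fun i => hsS i) (fun r => ?_) j
    rw [SetLike.mem_coe, hv]
    exact mul_mem (hwtS r) (add_mem (sub_mem (one_mem _) hQS) (SMulMemClass.smul_mem _ hQS))
end

section
/- Let A be a unital C*-algebra, n,m ≥ 2, Θ = (q_{ij}) with |q_{ij}| = 1, and let s_1,…,s_n, t_1,…,t_m ∈ A satisfy the O_n⊗_Θ O_m relations. Assume moreover that: (1) A equals the topological closure of the *-subalgebra generated by {s_1,…,s_n, t_1,…,t_m}; and (2) for every pair (ζ,ξ) of complex numbers with |ζ| = |ξ| = 1 there exists a *-algebra automorphism ρ_{ζ,ξ} of A with ρ_{ζ,ξ}(s_i) = ζ s_i for all i and ρ_{ζ,ξ}(t_j) = ξ t_j for all j (the gauge action). Then A is purely infinite and simple: for every x ∈ A with x ≠ 0 there exist a, b ∈ A such that a x b = 1. -/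
open scoped BigOperators

set_option linter.unusedSectionVars false
set_option linter.unusedSimpArgs false

section Alg
variable {A : Type*} [Ring A] [StarRing A] [Algebra ℂ A] [StarModule ℂ A]

/-- A finite Cuntz family. -/
structure CF {I : Type} [Fintype I] [DecidableEq I] (S : I → A) : Prop where
  iso : ∀ i j, star (S i) * S j = if i = j then 1 else 0
  sum : ∑ i, S i * star (S i) = 1

theorem CF.mul {I J : Type} [Fintype I] [DecidableEq I] [Fintype J] [DecidableEq J]
    {S : I → A} {T : J → A} (hS : CF S) (hT : CF T) :
    CF (fun p : I × J => S p.1 * T p.2) := by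
  constructor
  · rintro ⟨i, j⟩ ⟨k, l⟩
    have : star (S i * T j) * (S k * T l) = star (T j) * (star (S i) * S k) * T l := by
      rw [star_mul]; noncomm_ring
    simp only [this, hS.iso, Prod.mk.injEq]
    by_cases h : i = k
    · simp [h, hT.iso]
    · simp [h]
  · rw [Fintype.sum_prod_type]
    have : ∀ i, ∑ j, S i * T j * star (S i * T j) = S i * star (S i) := by
      intro i
      have : ∀ j, S i * T j * star (S i * T j) = S i * (T j * star (T j)) * star (S i) := by
        intro j; rw [star_mul]; noncomm_ring
      simp only [this]
      rw [← Finset.sum_mul, ← Finset.mul_sum, hT.sum, mul_one]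
    simp only [this, hS.sum]

/-- The product of a word. -/
def sw {n : ℕ} (s : Fin n → A) (μ : List (Fin n)) : A := (μ.map s).prod

theorem sw_cons {n : ℕ} (s : Fin n → A) (i : Fin n) (μ : List (Fin n)) :
    sw s (i :: μ) = s i * sw s μ := by simp [sw]

theorem sw_append {n : ℕ} (s : Fin n → A) (μ ν : List (Fin n)) :
    sw s (μ ++ ν) = sw s μ * sw s ν := by simp [sw]

theorem words {n : ℕ} {s : Fin n → A} (hs : CF s) (k : ℕ) :
    ∃ (I : Type) (_ : Fintype I) (_ : DecidableEq I) (e : I → List (Fin n)),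
      (∀ i, (e i).length = k) ∧ (∀ μ, μ.length = k → ∃ i, e i = μ) ∧
      CF (fun i => sw s (e i)) := by
  induction k with
  | zero =>
    refine ⟨Unit, inferInstance, inferInstance, fun _ => [], by simp, ?_, ?_⟩
    · intro μ hμ
      exact ⟨(), (List.length_eq_zero_iff.mp hμ).symm⟩
    · constructor <;> simp [sw]
  | succ k ih =>
    obtain ⟨I, _, _, e, h1, h2, h3⟩ := ih
    refine ⟨Fin n × I, inferInstance, inferInstance, fun p => p.1 :: e p.2, ?_, ?_, ?_⟩
    · intro i; simp [h1]
    · rintro (_ | ⟨i, μ⟩) hμ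
      · simp at hμ
      · obtain ⟨j, hj⟩ := h2 μ (by simpa using hμ)
        exact ⟨(i, j), by simp [hj]⟩
    · simp only [sw_cons]
      exact hs.mul h3

/-- The matrix algebra homomorphism of a Cuntz family. -/
noncomputable def CF.hom {I : Type} [Fintype I] [DecidableEq I] {S : I → A} (hS : CF S) :
    Matrix I I ℂ →ₐ[ℂ] A :=
  AlgHom.ofLinearMap
    { toFun := fun M => ∑ i, ∑ j, M i j • (S i * star (S j))
      map_add' := by intro M N; simp [add_smul, Finset.sum_add_distrib]
      map_smul' := by intro c M; simp [mul_smul, Finset.smul_sum] }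
    (by
      simp only [LinearMap.coe_mk, AddHom.coe_mk, Matrix.one_apply, ite_smul, one_smul, zero_smul,
        Finset.sum_ite_eq, Finset.mem_univ, if_true]
      exact hS.sum)
    (by
      intro M N
      simp only [LinearMap.coe_mk, AddHom.coe_mk]
      have key : ∀ i j, (∑ k, M i k • (S i * star (S k))) * (∑ l, N j l • (S j * star (S l)))
          = ∑ l, (M i j * N j l) • (S i * star (S l)) := by
        intro i j
        have : ∀ k l, (M i k • (S i * star (S k))) * (N j l • (S j * star (S l)))
            = if k = j then (M i k * N j l) • (S i * star (S l)) else 0 := by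
          intro k l
          have h : S i * star (S k) * (S j * star (S l))
            = S i * (star (S k) * S j) * star (S l) := by noncomm_ring
          rw [smul_mul_smul_comm, h, hS.iso]
          split_ifs <;> simp
        rw [Finset.sum_mul_sum, Finset.sum_comm]
        simp [this]
      rw [Finset.sum_mul_sum]
      simp only [key]
      refine Finset.sum_congr rfl fun i _ => ?_
      rw [Finset.sum_comm]
      refine Finset.sum_congr rfl fun l _ => ?_
      rw [Matrix.mul_apply, Finset.sum_smul])

theorem CF.hom_apply {I : Type} [Fintype I] [DecidableEq I] {S : I → A} (hS : CF S)
    (M : Matrix I I ℂ) : hS.hom M = ∑ i, ∑ j, M i j • (S i * star (S j)) := rfl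

theorem CF.mem_range {I : Type} [Fintype I] [DecidableEq I] {S : I → A} (hS : CF S) (i j : I) :
    S i * star (S j) ∈ LinearMap.range hS.hom.toLinearMap := by
  refine ⟨Matrix.single i j 1, ?_⟩
  change hS.hom _ = _
  rw [hS.hom_apply, Finset.sum_eq_single i, Finset.sum_eq_single j]
  · simp
  · intro k _ hk; simp [Matrix.single_apply, hk.symm]
  · simp
  · intro k _ hk; simp [Matrix.single_apply, hk.symm]
  · simp

theorem CF.hom_mul {I : Type} [Fintype I] [DecidableEq I] {S : I → A} (hS : CF S)
    (M : Matrix I I ℂ) (e : I → ℂ) :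
    hS.hom M * (∑ i, e i • S i) = ∑ i, (M.mulVec e) i • S i := by
  rw [hS.hom_apply, Finset.sum_mul]
  refine Finset.sum_congr rfl fun i _ => ?_
  have : ∀ j k, (M i j • (S i * star (S j))) * (e k • S k)
      = if j = k then (M i j * e k) • S i else 0 := by
    intro j k
    rw [smul_mul_smul_comm, mul_assoc, hS.iso]
    split_ifs <;> simp
  rw [Finset.sum_mul_sum]
  simp only [this, Finset.sum_ite_eq, Finset.mem_univ, if_true]
  rw [← Finset.sum_smul]; rfl

theorem CF.star_mul_vec {I : Type} [Fintype I] [DecidableEq I] {S : I → A} (hS : CF S)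
    (e : I → ℂ) :
    star (∑ i, e i • S i) * (∑ i, e i • S i) = (((∑ i, ‖e i‖ ^ 2 : ℝ)) : ℂ) • (1 : A) := by
  rw [star_sum, Finset.sum_mul_sum]
  have : ∀ j k, star (e j • S j) * (e k • S k)
      = if j = k then (star (e j) * e k) • (1 : A) else 0 := by
    intro j k
    rw [star_smul, smul_mul_smul_comm, hS.iso]
    split_ifs <;> simp
  simp only [this, Finset.sum_ite_eq, Finset.mem_univ, if_true]
  rw [← Finset.sum_smul]
  congr 1
  push_cast
  refine Finset.sum_congr rfl fun i _ => ?_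
  rw [← Complex.conj_mul']; rfl

theorem monoS {n : ℕ} {s : Fin n → A} (hs : CF s) {a : A}
    (ha : a ∈ Submonoid.closure (Set.range s ∪ star (Set.range s))) :
    a = 0 ∨ ∃ μ ν, a = sw s μ * star (sw s ν) := by
  induction ha using Submonoid.closure_induction_left with
  | one => exact Or.inr ⟨[], [], by simp [sw]⟩
  | mul_left x hx y hy ih =>
    rcases ih with rfl | ⟨μ, ν, rfl⟩
    · left; simp
    rcases hx with ⟨i, rfl⟩ | hx
    · exact Or.inr ⟨i :: μ, ν, by rw [sw_cons, mul_assoc]⟩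
    · obtain ⟨i, hi⟩ := hx
      obtain rfl : x = star (s i) := by rw [hi, star_star]
      rcases μ with _ | ⟨j, μ⟩
      · refine Or.inr ⟨[], ν ++ [i], ?_⟩
        rw [sw_append]; simp [sw]
      · by_cases h : i = j
        · subst h
          refine Or.inr ⟨μ, ν, ?_⟩
          rw [sw_cons, ← mul_assoc, ← mul_assoc, hs.iso]; simp
        · left
          rw [sw_cons, ← mul_assoc, ← mul_assoc, hs.iso]; simp [h]

theorem sw_refine {n : ℕ} {s : Fin n → A} (hs : CF s) (a d : ℕ) :
    ∀ (μ ν : List (Fin n)), μ.length = a → ν.length = a →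
    sw s μ * star (sw s ν) ∈ Submodule.span ℂ
      {y : A | ∃ μ ν : List (Fin n), μ.length = a + d ∧ ν.length = a + d ∧
        y = sw s μ * star (sw s ν)} := by
  induction d with
  | zero => exact fun μ ν h1 h2 => Submodule.subset_span ⟨μ, ν, h1, h2, rfl⟩
  | succ d ih =>
    intro μ ν h1 h2
    refine Submodule.span_le.mpr ?_ (ih μ ν h1 h2)
    rintro _ ⟨μ, ν, h1, h2, rfl⟩
    have : sw s μ * star (sw s ν) = ∑ i, sw s (μ ++ [i]) * star (sw s (ν ++ [i])) := by
      have : ∀ i, sw s (μ ++ [i]) * star (sw s (ν ++ [i]))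
          = sw s μ * (s i * star (s i)) * star (sw s ν) := by
        intro i
        rw [sw_append, sw_append, star_mul]; simp [sw, mul_assoc]
      simp only [this]
      rw [← Finset.sum_mul, ← Finset.mul_sum, hs.sum, mul_one]
    rw [this]
    refine Submodule.sum_mem _ fun i _ => Submodule.subset_span ⟨_, _, ?_, ?_, rfl⟩
    · simp [h1]; omega
    · simp [h2]; omega

theorem kill_step {n : ℕ} {s : Fin n → A} (hs : CF s) (i0 i1 : Fin n) (μ : List (Fin n)) :
    ∀ L, star (sw s μ) * (s i0 ^ (μ.length + L) * s i1) = 0 ∨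
      star (sw s μ) * (s i0 ^ (μ.length + L) * s i1) = s i0 ^ L * s i1 := by
  induction μ with
  | nil => intro L; right; simp [sw]
  | cons i μ ih =>
    intro L
    have : star (sw s (i :: μ)) * (s i0 ^ ((i :: μ).length + L) * s i1)
        = star (sw s μ) * ((star (s i) * s i0) * (s i0 ^ (μ.length + L) * s i1)) := by
      rw [sw_cons, star_mul, List.length_cons,
        show μ.length + 1 + L = (μ.length + L) + 1 by ring, pow_succ']
      noncomm_ring
    rw [this, hs.iso]
    by_cases h : i = i0
    · simpa [h] using ih L
    · left; simp [h]

theorem pow_iso {n : ℕ} {s : Fin n → A} (hs : CF s) (i0 : Fin n) (a : ℕ) :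
    star (s i0 ^ a) * s i0 ^ a = 1 := by
  induction a with
  | zero => simp
  | succ a ih =>
    rw [pow_succ', star_mul, mul_assoc, ← mul_assoc (star (s i0)), hs.iso]
    simpa using ih

theorem kill_iso {n : ℕ} {s : Fin n → A} (hs : CF s) {i0 i1 : Fin n} (a : ℕ) :
    star (s i0 ^ a * s i1) * (s i0 ^ a * s i1) = 1 := by
  rw [star_mul, mul_assoc, ← mul_assoc (star (s i0 ^ a)), pow_iso hs, one_mul, hs.iso]; simp

theorem kill_lt {n : ℕ} {s : Fin n → A} (hs : CF s) {i0 i1 : Fin n} (h01 : i0 ≠ i1) (a d : ℕ) :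
    star (s i0 ^ a * s i1) * (s i0 ^ (a + (d + 1)) * s i1) = 0 := by
  rw [star_mul, mul_assoc, pow_add, mul_assoc, ← mul_assoc (star (s i0 ^ a)), pow_iso hs, one_mul,
    pow_succ', mul_assoc, ← mul_assoc, hs.iso]
  simp [h01.symm]

theorem kill_pair {n : ℕ} {s : Fin n → A} (hs : CF s) {i0 i1 : Fin n} (h01 : i0 ≠ i1) (a b : ℕ) :
    ∃ c : ℂ, star (s i0 ^ a * s i1) * (s i0 ^ b * s i1) = c • (1 : A) := by
  rcases lt_trichotomy a b with h | rfl | h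
  · obtain ⟨d, rfl⟩ := Nat.exists_eq_add_of_lt h
    exact ⟨0, by rw [add_assoc, kill_lt hs h01]; simp⟩
  · exact ⟨1, by rw [kill_iso hs]; simp⟩
  · obtain ⟨d, rfl⟩ := Nat.exists_eq_add_of_lt h
    refine ⟨0, ?_⟩
    have := congrArg star (kill_lt hs h01 b d)
    rw [star_mul, star_star, star_zero] at this
    rw [add_assoc, this]; simp

theorem kill {n : ℕ} {s : Fin n → A} (hs : CF s) {i0 i1 : Fin n} (h01 : i0 ≠ i1) {a : A}
    (ha : a ∈ Submonoid.closure (Set.range s ∪ star (Set.range s))) :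
    ∀ᶠ L in Filter.atTop, ∃ c : ℂ,
      star (s i0 ^ L * s i1) * a * (s i0 ^ L * s i1) = c • (1 : A) := by
  rcases monoS hs ha with rfl | ⟨μ, ν, rfl⟩
  · exact Filter.Eventually.of_forall fun L => ⟨0, by simp⟩
  filter_upwards [Filter.eventually_ge_atTop (μ.length + ν.length)] with L hL
  obtain ⟨d, hd⟩ := Nat.exists_eq_add_of_le (show μ.length ≤ L by omega)
  obtain ⟨e, he⟩ := Nat.exists_eq_add_of_le (show ν.length ≤ L by omega)
  have hμ := kill_step hs i0 i1 μ d
  have hν := kill_step hs i0 i1 ν e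
  rw [← hd] at hμ
  rw [← he] at hν
  have h : star (s i0 ^ L * s i1) * (sw s μ * star (sw s ν)) * (s i0 ^ L * s i1)
      = star (star (sw s μ) * (s i0 ^ L * s i1)) * (star (sw s ν) * (s i0 ^ L * s i1)) := by
    rw [star_mul (star (sw s μ)), star_star]; noncomm_ring
  rw [h]
  rcases hμ with hμ | hμ
  · exact ⟨0, by rw [hμ]; simp⟩
  rcases hν with hν | hν
  · exact ⟨0, by rw [hν]; simp⟩
  rw [hμ, hν]
  exact kill_pair hs h01 d e

/-- Commutation up to a scalar. -/
def QC (a b : A) : Prop := ∃ c : ℂ, a * b = c • (b * a)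

theorem QC.mul_left {a a' b : A} (h : QC a b) (h' : QC a' b) : QC (a * a') b := by
  obtain ⟨c, hc⟩ := h
  obtain ⟨d, hd⟩ := h'
  refine ⟨d * c, ?_⟩
  rw [mul_assoc, hd, mul_smul_comm, ← mul_assoc, hc, smul_mul_assoc, smul_smul, mul_assoc]

theorem QC.mul_right {a b b' : A} (h : QC a b) (h' : QC a b') : QC a (b * b') := by
  obtain ⟨c, hc⟩ := h
  obtain ⟨d, hd⟩ := h'
  refine ⟨c * d, ?_⟩
  rw [← mul_assoc, hc, smul_mul_assoc, mul_assoc, hd, mul_smul_comm, smul_smul, mul_assoc]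

theorem QC.closure {X Y : Set A} (h : ∀ x ∈ X, ∀ y ∈ Y, QC x y) {a b : A}
    (ha : a ∈ Submonoid.closure X) (hb : b ∈ Submonoid.closure Y) : QC a b := by
  induction ha using Submonoid.closure_induction with
  | one => exact ⟨1, by simp⟩
  | mul x y _ _ hx hy => exact hx.mul_left hy
  | mem x hx =>
    induction hb using Submonoid.closure_induction with
    | one => exact ⟨1, by simp⟩
    | mul u v _ _ hu hv => exact hu.mul_right hv
    | mem y hy => exact h x hx y hy

theorem QC.star {a b : A} (h : QC a b) : QC (star b) (star a) := by
  obtain ⟨c, hc⟩ := h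
  exact ⟨Star.star c, by rw [← star_mul, hc, star_smul, star_mul]⟩

theorem QC.symm {a b : A} (h : ∃ c : ℂ, c ≠ 0 ∧ a * b = c • (b * a)) : QC b a := by
  obtain ⟨c, h0, hc⟩ := h
  exact ⟨c⁻¹, by rw [hc, smul_smul, inv_mul_cancel₀ h0, one_smul]⟩

theorem star_rel {n m : ℕ} {s : Fin n → A} {t : Fin m → A} (hs : CF s)
    {Θ : Fin n → Fin m → ℂ} (hΘ : ∀ i j, Θ i j ≠ 0)
    (hc : ∀ i j, s i * t j = Θ i j • (t j * s i)) (i : Fin n) (j : Fin m) :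
    star (s i) * t j = (Θ i j)⁻¹ • (t j * star (s i)) := by
  have h1 : ∀ k, t j * s k = (Θ k j)⁻¹ • (s k * t j) := by
    intro k; rw [hc, smul_smul, inv_mul_cancel₀ (hΘ k j), one_smul]
  calc star (s i) * t j = star (s i) * t j * ∑ k, s k * star (s k) := by rw [hs.sum, mul_one]
    _ = ∑ k, (Θ k j)⁻¹ • ((star (s i) * s k) * (t j * star (s k))) := by
        rw [Finset.mul_sum]
        refine Finset.sum_congr rfl fun k _ => ?_
        rw [mul_assoc, ← mul_assoc (t j), h1, smul_mul_assoc, mul_smul_comm]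
        congr 1; noncomm_ring
    _ = _ := by simp [hs.iso]

theorem qc_gen {n m : ℕ} {s : Fin n → A} {t : Fin m → A} (hs : CF s)
    {Θ : Fin n → Fin m → ℂ} (hΘ : ∀ i j, Θ i j ≠ 0)
    (hc : ∀ i j, s i * t j = Θ i j • (t j * s i)) :
    ∀ x ∈ Set.range s ∪ star (Set.range s), ∀ y ∈ Set.range t ∪ star (Set.range t), QC x y := by
  have e : ∀ i j, star (s i) * t j = (Θ i j)⁻¹ • (t j * star (s i)) := star_rel hs hΘ hc
  rintro x (⟨i, rfl⟩ | ⟨i, hi⟩) y (⟨j, rfl⟩ | ⟨j, hj⟩)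
  · exact ⟨_, hc i j⟩
  · obtain rfl : y = star (t j) := by rw [hj, star_star]
    have h : QC (t j) (star (s i)) := QC.symm ⟨_, inv_ne_zero (hΘ i j), e i j⟩
    simpa using h.star
  · obtain rfl : x = star (s i) := by rw [hi, star_star]
    exact ⟨_, e i j⟩
  · obtain rfl : x = star (s i) := by rw [hi, star_star]
    obtain rfl : y = star (t j) := by rw [hj, star_star]
    exact (QC.symm ⟨_, hΘ i j, hc i j⟩ : QC (t j) (s i)).star

end Alg

section CStar
variable {A : Type*} [CStarAlgebra A]

theorem CF.eigen [Nontrivial A] {I : Type} [Fintype I] [DecidableEq I] {S : I → A} (hS : CF S)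
    (M : Matrix I I ℂ) (hp : IsSelfAdjoint (hS.hom M)) :
    ∃ (l : ℂ) (e : I → ℂ), ‖l‖ = ‖hS.hom M‖ ∧
      star (∑ i, e i • S i) * (∑ i, e i • S i) = 1 ∧
      star (∑ i, e i • S i) * hS.hom M * (∑ i, e i • S i) = l • (1 : A) := by
  obtain ⟨l, hl, hl2⟩ := spectrum.exists_nnnorm_eq_spectralRadius (hS.hom M)
  rw [hp.spectralRadius_eq_nnnorm] at hl2
  have hl3 : ‖l‖ = ‖hS.hom M‖ := by
    have : ‖l‖₊ = ‖hS.hom M‖₊ := by exact_mod_cast hl2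
    exact congrArg NNReal.toReal this
  have hl4 := AlgHom.spectrum_apply_subset hS.hom M hl
  rw [← Matrix.spectrum_toLin', ← Module.End.hasEigenvalue_iff_mem_spectrum] at hl4
  obtain ⟨f, hf⟩ := hl4.exists_hasEigenvector
  have hf1 : M.mulVec f = l • f := by simpa using hf.apply_eq_smul
  have hf2 : f ≠ 0 := hf.2
  set r : ℝ := ∑ i, ‖f i‖ ^ 2 with hr
  have hrpos : 0 < r := by
    obtain ⟨i, hi⟩ := Function.ne_iff.mp hf2
    refine Finset.sum_pos' (fun i _ => by positivity) ⟨i, Finset.mem_univ _, ?_⟩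
    have : 0 < ‖f i‖ := norm_pos_iff.mpr hi
    positivity
  set q : ℂ := (((Real.sqrt r)⁻¹ : ℝ) : ℂ) with hq
  have hv1 : star (∑ i, (q • f) i • S i) * (∑ i, (q • f) i • S i) = 1 := by
    rw [hS.star_mul_vec]
    have : ∑ i, ‖(q • f) i‖ ^ 2 = 1 := by
      have : ∀ i, ‖(q • f) i‖ ^ 2 = r⁻¹ * ‖f i‖ ^ 2 := by
        intro i
        rw [Pi.smul_apply, smul_eq_mul, norm_mul, mul_pow, hq, Complex.norm_real, norm_inv, inv_pow,
          Real.norm_eq_abs, sq_abs, Real.sq_sqrt hrpos.le]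
      simp only [this]
      rw [← Finset.mul_sum, ← hr, inv_mul_cancel₀ hrpos.ne']
    rw [this]; simp
  refine ⟨l, q • f, hl3, hv1, ?_⟩
  rw [mul_assoc, hS.hom_mul, Matrix.mulVec_smul, hf1]
  have : ∑ i, (q • l • f) i • S i = l • ∑ i, (q • f) i • S i := by
    rw [Finset.smul_sum]
    refine Finset.sum_congr rfl fun i _ => ?_
    simp only [Pi.smul_apply, smul_eq_mul, smul_smul]
    congr 1; ring
  rw [this, mul_smul_comm, hv1]

/-- The monoid generated by a family and its adjoints. -/
noncomputable def mon {n : ℕ} (s : Fin n → A) : Submonoid A :=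
  Submonoid.closure (Set.range s ∪ star (Set.range s))

theorem mem_mon {n : ℕ} (s : Fin n → A) (i : Fin n) : s i ∈ mon s :=
  Submonoid.subset_closure (Or.inl ⟨i, rfl⟩)

theorem star_mem_mon {n : ℕ} (s : Fin n → A) {a : A} (ha : a ∈ mon s) : star a ∈ mon s := by
  unfold mon at ha ⊢
  induction ha using Submonoid.closure_induction with
  | one => simp
  | mul x y _ _ hx hy => rw [star_mul]; exact mul_mem hy hx
  | mem x hx =>
    apply Submonoid.subset_closure
    rcases hx with h | h
    · right; simpa using h
    · left; exact h

theorem sw_mem {n : ℕ} (s : Fin n → A) (μ : List (Fin n)) : sw s μ ∈ mon s := by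
  induction μ with
  | nil => simp [sw]
  | cons i μ ih => rw [sw_cons]; exact mul_mem (mem_mon s i) ih

theorem adjoin_span {n m : ℕ} {s : Fin n → A} {t : Fin m → A}
    (hqc : ∀ a ∈ mon s, ∀ b ∈ mon t, QC b a) {x : A}
    (hx : x ∈ StarAlgebra.adjoin ℂ (Set.range s ∪ Set.range t)) :
    x ∈ Submodule.span ℂ {y : A | ∃ a ∈ mon s, ∃ b ∈ mon t, y = a * b} := by
  have hx' : x ∈ Subalgebra.toSubmodule
    (StarAlgebra.adjoin ℂ (Set.range s ∪ Set.range t)).toSubalgebra := hx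
  rw [StarAlgebra.adjoin_eq_span] at hx'
  refine Submodule.span_le.mpr ?_ hx'
  intro y hy
  have : ∃ c : ℂ, ∃ a ∈ mon s, ∃ b ∈ mon t, y = c • (a * b) := by
    have hy' : y ∈ Submonoid.closure (Set.range s ∪ Set.range t ∪ star (Set.range s ∪ Set.range t)) := hy
    have hmem : ∀ z ∈ Set.range s ∪ Set.range t ∪ star (Set.range s ∪ Set.range t),
        z ∈ mon s ∨ z ∈ mon t := by
      rintro z ((h | h) | (h | h))
      · exact Or.inl (Submonoid.subset_closure (Or.inl h))
      · exact Or.inr (Submonoid.subset_closure (Or.inl h))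
      · exact Or.inl (Submonoid.subset_closure (Or.inr h))
      · exact Or.inr (Submonoid.subset_closure (Or.inr h))
    clear hy
    induction hy' using Submonoid.closure_induction_left with
    | one => exact ⟨1, 1, one_mem _, 1, one_mem _, by simp⟩
    | mul_left z hz y _ ih =>
      obtain ⟨c, a, ha, b, hb, rfl⟩ := ih
      rcases hmem z hz with h | h
      · exact ⟨c, z * a, mul_mem h ha, b, hb, by rw [mul_smul_comm, mul_assoc]⟩
      · obtain ⟨d, hd⟩ := hqc a ha z h
        refine ⟨c * d, a, ha, z * b, mul_mem h hb, ?_⟩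
        rw [mul_smul_comm, ← mul_assoc, hd, smul_mul_assoc, smul_smul, mul_assoc]
  obtain ⟨c, a, ha, b, hb, rfl⟩ := this
  exact Submodule.smul_mem _ _ (Submodule.subset_span ⟨a, ha, b, hb, rfl⟩)

theorem kill_poly {n m : ℕ} {s : Fin n → A} {t : Fin m → A} (hs : CF s) (ht : CF t)
    (hqc : ∀ a ∈ mon s, ∀ b ∈ mon t, QC b a) {i0 i1 : Fin n} (hi : i0 ≠ i1)
    {j0 j1 : Fin m} (hj : j0 ≠ j1) {x : A}
    (hx : x ∈ StarAlgebra.adjoin ℂ (Set.range s ∪ Set.range t)) :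
    ∀ᶠ L in Filter.atTop, ∃ c : ℂ,
      star ((s i0 ^ L * s i1) * (t j0 ^ L * t j1)) * x * ((s i0 ^ L * s i1) * (t j0 ^ L * t j1))
        = c • (1 : A) := by
  suffices h : ∀ x ∈ Submodule.span ℂ {y : A | ∃ a ∈ mon s, ∃ b ∈ mon t, y = a * b},
      ∀ᶠ L in Filter.atTop, ∃ c : ℂ,
      star ((s i0 ^ L * s i1) * (t j0 ^ L * t j1)) * x * ((s i0 ^ L * s i1) * (t j0 ^ L * t j1))
        = c • (1 : A) from h x (adjoin_span hqc hx)
  intro x hx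
  induction hx using Submodule.span_induction with
  | zero => exact Filter.Eventually.of_forall fun L => ⟨0, by simp⟩
  | add x y _ _ h1 h2 =>
    filter_upwards [h1, h2] with L h1 h2
    obtain ⟨c, hc⟩ := h1
    obtain ⟨d, hd⟩ := h2
    exact ⟨c + d, by rw [mul_add, add_mul, hc, hd, add_smul]⟩
  | smul c x _ h =>
    filter_upwards [h] with L h
    obtain ⟨d, hd⟩ := h
    exact ⟨c * d, by rw [mul_smul_comm, smul_mul_assoc, hd, smul_smul]⟩
  | mem x hx =>
    obtain ⟨a, ha, b, hb, rfl⟩ := hx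
    filter_upwards [kill hs hi ha, kill ht hj hb] with L h1 h2
    obtain ⟨c, hc⟩ := h1
    obtain ⟨d, hd⟩ := h2
    have hX : s i0 ^ L * s i1 ∈ mon s := mul_mem (pow_mem (mem_mon s i0) L) (mem_mon s i1)
    obtain ⟨q, hq⟩ := hqc _ hX b hb
    generalize s i0 ^ L * s i1 = X at *
    generalize t j0 ^ L * t j1 = Y at *
    refine ⟨q * (c * d), ?_⟩
    have : star (X * Y) * (a * b) * (X * Y) = star Y * (star X * a * (b * X)) * Y := by
      rw [star_mul]; noncomm_ring
    rw [this, hq, mul_smul_comm, ← mul_assoc, hc, mul_smul_comm, smul_mul_assoc, smul_mul_assoc,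
      one_mul, mul_smul_comm, smul_mul_assoc, hd, smul_smul, smul_smul, mul_assoc]

/-- The balanced span. -/
noncomputable def balanced {n m : ℕ} (s : Fin n → A) (t : Fin m → A) : Submodule ℂ A :=
  Submodule.span ℂ {y : A | ∃ μ μ' : List (Fin n), ∃ ν ν' : List (Fin m),
    μ.length = μ'.length ∧ ν.length = ν'.length ∧
    y = (sw s μ * star (sw s μ')) * (sw t ν * star (sw t ν'))}

/-- The finite levels of the core. -/
noncomputable def level {n m : ℕ} (s : Fin n → A) (t : Fin m → A) (k : ℕ) : Submodule ℂ A :=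
  Submodule.span ℂ {y : A | ∃ μ μ' : List (Fin n), ∃ ν ν' : List (Fin m),
    μ.length = k ∧ μ'.length = k ∧ ν.length = k ∧ ν'.length = k ∧
    y = (sw s μ * sw t ν) * star (sw s μ' * sw t ν')}

theorem balanced_level {n m : ℕ} {s : Fin n → A} {t : Fin m → A} (hs : CF s) (ht : CF t)
    (hqc : ∀ a ∈ mon s, ∀ b ∈ mon t, QC a b) {x : A} (hx : x ∈ balanced s t) :
    ∀ᶠ k in Filter.atTop, x ∈ level s t k := by
  unfold balanced at hx
  induction hx using Submodule.span_induction with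
  | zero => exact Filter.Eventually.of_forall fun L => zero_mem _
  | add x y _ _ h1 h2 =>
    filter_upwards [h1, h2] with L h1 h2
    exact add_mem h1 h2
  | smul c x _ h =>
    filter_upwards [h] with L h
    exact Submodule.smul_mem _ _ h
  | mem x hx =>
    obtain ⟨μ, μ', ν, ν', h1, h2, rfl⟩ := hx
    filter_upwards [Filter.eventually_ge_atTop (μ.length + ν.length)] with k hk
    obtain ⟨d, hd⟩ := Nat.exists_eq_add_of_le (show μ.length ≤ k by omega)
    obtain ⟨e, he⟩ := Nat.exists_eq_add_of_le (show ν.length ≤ k by omega)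
    have hS := sw_refine hs μ.length d μ μ' rfl h1.symm
    have hT := sw_refine ht ν.length e ν ν' rfl h2.symm
    rw [← hd] at hS
    rw [← he] at hT
    have h := Submodule.mul_mem_mul hS hT
    rw [Submodule.span_mul_span] at h
    refine Submodule.span_le.mpr ?_ h
    rintro _ ⟨_, ⟨μ, μ', l1, l2, rfl⟩, _, ⟨ν, ν', l3, l4, rfl⟩, rfl⟩
    obtain ⟨c, hc⟩ := hqc _ (star_mem_mon s (sw_mem s μ')) _
      (mul_mem (sw_mem t ν) (star_mem_mon t (sw_mem t ν')))
    have : sw s μ * star (sw s μ') * (sw t ν * star (sw t ν'))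
        = c • ((sw s μ * sw t ν) * star (sw s μ' * sw t ν')) := by
      rw [mul_assoc, hc, mul_smul_comm, star_mul]
      congr 1; noncomm_ring
    change sw s μ * star (sw s μ') * (sw t ν * star (sw t ν')) ∈ level s t k
    rw [this]
    exact Submodule.smul_mem _ _ (Submodule.subset_span ⟨μ, μ', ν, ν', l1, l2, l3, l4, rfl⟩)

theorem eigen_level [Nontrivial A] {n m : ℕ} {s : Fin n → A} {t : Fin m → A} (hs : CF s)
    (ht : CF t) {k : ℕ} {p : A} (hp : p ∈ level s t k) (hsa : IsSelfAdjoint p) :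
    ∃ (l : ℂ) (v : A), ‖l‖ = ‖p‖ ∧ star v * v = 1 ∧ star v * p * v = l • (1 : A) ∧
      v ∈ Submodule.span ℂ {y : A | ∃ μ ν, μ.length = k ∧ ν.length = k ∧
        y = sw s μ * sw t ν} := by
  obtain ⟨I, _, _, e, he1, he2, hI⟩ := words hs k
  obtain ⟨J, _, _, f, hf1, hf2, hJ⟩ := words ht k
  have hS := hI.mul hJ
  have hle : level s t k ≤ LinearMap.range hS.hom.toLinearMap := by
    refine Submodule.span_le.mpr ?_
    rintro _ ⟨μ, μ', ν, ν', l1, l2, l3, l4, rfl⟩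
    obtain ⟨i, rfl⟩ := he2 μ l1
    obtain ⟨i', rfl⟩ := he2 μ' l2
    obtain ⟨j, rfl⟩ := hf2 ν l3
    obtain ⟨j', rfl⟩ := hf2 ν' l4
    exact hS.mem_range (i, j) (i', j')
  obtain ⟨M, hM⟩ := hle hp
  have hM' : hS.hom M = p := hM
  subst hM'
  obtain ⟨l, c, h1, h2, h3⟩ := hS.eigen M hsa
  refine ⟨l, _, h1, h2, h3, ?_⟩
  exact Submodule.sum_mem _ fun i _ => Submodule.smul_mem _ _
    (Submodule.subset_span ⟨e i.1, f i.2, he1 _, hf1 _, rfl⟩)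

/-- The character. -/
noncomputable def ee (a : ℝ) : ℂ := Complex.exp ((2 * Real.pi * a : ℝ) * Complex.I)

theorem norm_ee (a : ℝ) : ‖ee a‖ = 1 := Complex.norm_exp_ofReal_mul_I _

theorem ee_div (N j : ℕ) : ee ((j : ℝ) / N) = Complex.exp (2 * Real.pi * Complex.I / N) ^ j := by
  rw [ee, ← Complex.exp_nat_mul]
  congr 1
  push_cast
  ring

theorem root_sum {N a b : ℕ} (ha : a < N) (hb : b < N) (hab : a ≠ b) :
    ∑ j ∈ Finset.range N, ee ((j : ℝ) / N) ^ a * star (ee ((j : ℝ) / N)) ^ b = 0 := by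
  have hN : N ≠ 0 := by omega
  have hprim := Complex.isPrimitiveRoot_exp N hN
  set ω := Complex.exp (2 * Real.pi * Complex.I / N) with hω
  have hnorm : ‖ω‖ = 1 := hprim.norm'_eq_one hN
  have hst : star ω * ω = 1 := by
    have := Complex.conj_mul' ω
    rw [hnorm] at this
    simpa using this
  have hr : ∀ j : ℕ, ee ((j : ℝ) / N) ^ a * star (ee ((j : ℝ) / N)) ^ b
      = (ω ^ a * star ω ^ b) ^ j := by
    intro j
    rw [ee_div, ← hω, star_pow, mul_pow, ← pow_mul, ← pow_mul, ← pow_mul, ← pow_mul,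
      mul_comm j a, mul_comm j b]
  simp only [hr]
  have h1 : ω ^ a * star ω ^ b ≠ 1 := by
    intro h
    apply hab
    apply hprim.pow_inj ha hb
    calc ω ^ a = ω ^ a * (star ω * ω) ^ b := by rw [hst, one_pow, mul_one]
      _ = (ω ^ a * star ω ^ b) * ω ^ b := by rw [mul_pow]; ring
      _ = ω ^ b := by rw [h, one_mul]
  have h2 : (ω ^ a * star ω ^ b) ^ N = 1 := by
    rw [mul_pow, ← pow_mul, ← pow_mul, mul_comm a, mul_comm b, pow_mul, pow_mul, ← star_pow,
      hprim.pow_eq_one]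
    simp
  rw [geom_sum_eq h1, h2]; simp

/-- Averaging over a finite subgroup of the torus. -/
noncomputable def avg (g : ℝ → ℝ → (A ≃⋆ₐ[ℂ] A)) (N : ℕ) (x : A) : A :=
  ((N : ℂ) ^ 2)⁻¹ • ∑ p ∈ Finset.range N ×ˢ Finset.range N,
    g ((p.1 : ℝ) / N) ((p.2 : ℝ) / N) x

theorem avg_add (g : ℝ → ℝ → (A ≃⋆ₐ[ℂ] A)) (N : ℕ) (x y : A) :
    avg g N (x + y) = avg g N x + avg g N y := by
  simp [avg, Finset.sum_add_distrib]

theorem avg_smul (g : ℝ → ℝ → (A ≃⋆ₐ[ℂ] A)) (N : ℕ) (c : ℂ) (x : A) :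
    avg g N (c • x) = c • avg g N x := by
  simp only [avg, map_smul]
  rw [← Finset.smul_sum, smul_comm]

theorem avg_sub (g : ℝ → ℝ → (A ≃⋆ₐ[ℂ] A)) (N : ℕ) (x y : A) :
    avg g N (x - y) = avg g N x - avg g N y := by
  simp [avg, Finset.sum_sub_distrib, smul_sub]

theorem avg_one (g : ℝ → ℝ → (A ≃⋆ₐ[ℂ] A)) {N : ℕ} (hN : N ≠ 0) (c : ℂ) :
    avg g N (c • (1 : A)) = c • (1 : A) := by
  rw [avg_smul]
  congr 1
  have : (N : ℂ) ≠ 0 := by exact_mod_cast hN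
  simp only [avg, map_one, Finset.sum_const, Finset.card_product, Finset.card_range]
  rw [← Nat.cast_smul_eq_nsmul ℂ, smul_smul]
  push_cast
  rw [← sq, inv_mul_cancel₀ (by positivity), one_smul]

theorem avg_norm (g : ℝ → ℝ → (A ≃⋆ₐ[ℂ] A)) (N : ℕ) (x : A) : ‖avg g N x‖ ≤ ‖x‖ := by
  rcases eq_or_ne N 0 with rfl | hN
  · simp [avg]
  have : (0 : ℝ) < N := by exact_mod_cast Nat.pos_of_ne_zero hN
  have h : ‖∑ p ∈ Finset.range N ×ˢ Finset.range N, g ((p.1 : ℝ) / N) ((p.2 : ℝ) / N) x‖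
      ≤ (N : ℝ) ^ 2 * ‖x‖ := by
    refine (norm_sum_le _ _).trans ?_
    simp only [StarAlgEquiv.norm_map]
    simp [sq]
  rw [avg, norm_smul, norm_inv, norm_pow, Complex.norm_natCast, inv_mul_le_iff₀ (by positivity)]
  exact h

theorem avg_star (g : ℝ → ℝ → (A ≃⋆ₐ[ℂ] A)) (N : ℕ) {x : A} (hx : IsSelfAdjoint x) :
    IsSelfAdjoint (avg g N x) := by
  rw [IsSelfAdjoint, avg, star_smul, star_sum]
  simp only [← map_star, hx.star_eq]
  simp

/-- Homogeneous elements for the gauge action. -/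
def Homog (g : ℝ → ℝ → (A ≃⋆ₐ[ℂ] A)) (a : A) : Prop :=
  ∀ α β, ∃ c : ℂ, ‖c‖ = 1 ∧ g α β a = c • a

theorem Homog.mul {g : ℝ → ℝ → (A ≃⋆ₐ[ℂ] A)} {a b : A} (ha : Homog g a) (hb : Homog g b) :
    Homog g (a * b) := by
  intro α β
  obtain ⟨c, hc, h⟩ := ha α β
  obtain ⟨d, hd, h'⟩ := hb α β
  exact ⟨c * d, by simp [hc, hd], by rw [map_mul, h, h', smul_mul_smul_comm]⟩

theorem Homog.pow {g : ℝ → ℝ → (A ≃⋆ₐ[ℂ] A)} {a : A} (ha : Homog g a) (k : ℕ) :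
    Homog g (a ^ k) := by
  induction k with
  | zero => exact fun α β => ⟨1, by simp, by simp⟩
  | succ k ih => rw [pow_succ]; exact ih.mul ha

theorem avg_conj {g : ℝ → ℝ → (A ≃⋆ₐ[ℂ] A)} (N : ℕ) {a : A} (ha : Homog g a) (x : A) :
    avg g N (star a * x * a) = star a * avg g N x * a := by
  have : ∀ α β, g α β (star a * x * a) = star a * g α β x * a := by
    intro α β
    obtain ⟨c, hc, h⟩ := ha α β
    rw [map_mul, map_mul, map_star, h, star_smul, smul_mul_assoc, smul_mul_smul_comm]
    have : star c * c = 1 := by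
      have := Complex.conj_mul' c
      rw [hc] at this
      simpa using this
    rw [this, one_smul]
  simp only [avg, this]
  rw [← Finset.sum_mul, ← Finset.mul_sum, mul_smul_comm, smul_mul_assoc]

theorem gauge_sw {n : ℕ} {s : Fin n → A} {ρ : A ≃⋆ₐ[ℂ] A} {z : ℂ} (h : ∀ i, ρ (s i) = z • s i)
    (μ : List (Fin n)) : ρ (sw s μ) = z ^ μ.length • sw s μ := by
  induction μ with
  | nil => simp [sw]
  | cons i μ ih =>
    rw [sw_cons, map_mul, h, ih, smul_mul_smul_comm, List.length_cons, pow_succ']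

theorem gauge_sw2 {n : ℕ} {s : Fin n → A} {ρ : A ≃⋆ₐ[ℂ] A} {z : ℂ} (h : ∀ i, ρ (s i) = z • s i)
    (μ ν : List (Fin n)) : ρ (sw s μ * star (sw s ν))
      = (z ^ μ.length * star z ^ ν.length) • (sw s μ * star (sw s ν)) := by
  rw [map_mul, map_star, gauge_sw h, gauge_sw h, star_smul, smul_mul_smul_comm, star_pow]

theorem avg_balanced {n m : ℕ} {s : Fin n → A} {t : Fin m → A} (hs : CF s) (ht : CF t)
    (hqc : ∀ a ∈ mon s, ∀ b ∈ mon t, QC b a) {g : ℝ → ℝ → (A ≃⋆ₐ[ℂ] A)}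
    (hgs : ∀ α β i, g α β (s i) = ee α • s i) (hgt : ∀ α β j, g α β (t j) = ee β • t j) {x : A}
    (hx : x ∈ StarAlgebra.adjoin ℂ (Set.range s ∪ Set.range t)) :
    ∀ᶠ N in Filter.atTop, avg g N x ∈ balanced s t := by
  suffices h : ∀ x ∈ Submodule.span ℂ {y : A | ∃ a ∈ mon s, ∃ b ∈ mon t, y = a * b},
      ∀ᶠ N in Filter.atTop, avg g N x ∈ balanced s t from h x (adjoin_span hqc hx)
  intro x hx
  induction hx using Submodule.span_induction with
  | zero => exact Filter.Eventually.of_forall fun L => by simp [avg]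
  | add x y _ _ h1 h2 =>
    filter_upwards [h1, h2] with L h1 h2
    rw [avg_add]; exact add_mem h1 h2
  | smul c x _ h =>
    filter_upwards [h] with L h
    rw [avg_smul]; exact Submodule.smul_mem _ _ h
  | mem x hx =>
    obtain ⟨a, ha, b, hb, rfl⟩ := hx
    rcases monoS hs ha with rfl | ⟨μ, μ', rfl⟩
    · exact Filter.Eventually.of_forall fun L => by simp [avg]
    rcases monoS ht hb with rfl | ⟨ν, ν', rfl⟩
    · exact Filter.Eventually.of_forall fun L => by simp [avg]
    filter_upwards [Filter.eventually_gt_atTop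
      (μ.length + μ'.length + ν.length + ν'.length)] with N hN
    have hg : ∀ α β, g α β (sw s μ * star (sw s μ') * (sw t ν * star (sw t ν')))
        = ((ee α ^ μ.length * star (ee α) ^ μ'.length)
          * (ee β ^ ν.length * star (ee β) ^ ν'.length)) •
          (sw s μ * star (sw s μ') * (sw t ν * star (sw t ν'))) := by
      intro α β
      rw [map_mul, gauge_sw2 (hgs α β), gauge_sw2 (hgt α β), smul_mul_smul_comm]
    rw [avg]
    simp only [hg]
    rw [← Finset.sum_smul, Finset.sum_product]
    dsimp only
    rw [← Finset.sum_mul_sum]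
    by_cases h1 : μ.length = μ'.length
    · by_cases h2 : ν.length = ν'.length
      · exact Submodule.smul_mem _ _ (Submodule.smul_mem _ _
          (Submodule.subset_span ⟨μ, μ', ν, ν', h1, h2, rfl⟩))
      · rw [root_sum (a := ν.length) (by omega) (by omega) h2]; simp
    · rw [root_sum (a := μ.length) (by omega) (by omega) h1]; simp

theorem gauge_tendsto {n m : ℕ} {s : Fin n → A} {t : Fin m → A} {g : ℝ → ℝ → (A ≃⋆ₐ[ℂ] A)}
    (hgs : ∀ α β i, g α β (s i) = ee α • s i) (hgt : ∀ α β j, g α β (t j) = ee β • t j)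
    (hgen : (StarAlgebra.adjoin ℂ (Set.range s ∪ Set.range t)).topologicalClosure = ⊤) (x : A) :
    Filter.Tendsto (fun p : ℝ × ℝ => g p.1 p.2 x) (nhds 0) (nhds x) := by
  have h0 : ∀ y ∈ StarAlgebra.adjoin ℂ (Set.range s ∪ Set.range t),
      Filter.Tendsto (fun p : ℝ × ℝ => g p.1 p.2 y) (nhds 0) (nhds y) := by
    intro y hy
    have hcont : Continuous ee := by unfold ee; fun_prop
    have hee : ee 0 = 1 := by simp [ee]
    induction hy using StarAlgebra.adjoin_induction with
    | mem y hy =>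
      rcases hy with ⟨i, rfl⟩ | ⟨j, rfl⟩
      · simp only [hgs]
        have : Continuous (fun p : ℝ × ℝ => ee p.1 • s i) := by fun_prop
        simpa [hee] using this.tendsto 0
      · simp only [hgt]
        have : Continuous (fun p : ℝ × ℝ => ee p.2 • t j) := by fun_prop
        simpa [hee] using this.tendsto 0
    | algebraMap r =>
      simp only [Algebra.algebraMap_eq_smul_one, map_smul, map_one]
      exact tendsto_const_nhds
    | add x y _ _ hx hy => simpa only [map_add] using hx.add hy
    | mul x y _ _ hx hy => simpa only [map_mul] using hx.mul hy
    | star x _ hx => simpa only [map_star] using hx.star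
  rw [Metric.tendsto_nhds]
  intro ε hε
  have hx : x ∈ (StarAlgebra.adjoin ℂ (Set.range s ∪ Set.range t)).topologicalClosure := by
    rw [hgen]; trivial
  have hx' : x ∈ closure (StarAlgebra.adjoin ℂ (Set.range s ∪ Set.range t) : Set A) := hx
  obtain ⟨y, hy, hxy⟩ := Metric.mem_closure_iff.mp hx' (ε / 3) (by positivity)
  filter_upwards [Metric.tendsto_nhds.mp (h0 y hy) (ε / 3) (by positivity)] with p hp
  have h1 : dist (g p.1 p.2 x) (g p.1 p.2 y) < ε / 3 := by
    rw [dist_eq_norm, ← map_sub, StarAlgEquiv.norm_map, ← dist_eq_norm]; exact hxy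
  have := dist_triangle4 (g p.1 p.2 x) (g p.1 p.2 y) y x
  rw [dist_comm y x] at this
  linarith

theorem norm_sum_mono {ι : Type*} {s t : Finset ι} (hst : s ⊆ t) (f : ι → A) :
    ‖∑ i ∈ s, star (f i) * f i‖ ≤ ‖∑ i ∈ t, star (f i) * f i‖ := by
  let := CStarAlgebra.spectralOrder A
  let := CStarAlgebra.spectralOrderedRing A
  refine CStarAlgebra.norm_le_norm_of_nonneg_of_le ?_ ?_
  · exact Finset.sum_nonneg fun i _ => star_mul_self_nonneg _
  · exact Finset.sum_le_sum_of_subset_of_nonneg hst fun i _ _ => star_mul_self_nonneg _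

theorem avg_lower {g : ℝ → ℝ → (A ≃⋆ₐ[ℂ] A)} {x : A} (hx : x ≠ 0)
    (hg : Filter.Tendsto (fun p : ℝ × ℝ => g p.1 p.2 (star x * x)) (nhds 0)
      (nhds (star x * x))) :
    ∃ c : ℝ, 0 < c ∧ ∃ K : ℕ, K ≠ 0 ∧ ∀ L : ℕ, L ≠ 0 → c ≤ ‖avg g (K * L) (star x * x)‖ := by
  set h := star x * x with hh
  have hpos : 0 < ‖h‖ := by
    rw [hh, CStarRing.norm_star_mul_self]
    have := norm_pos_iff.mpr hx
    positivity
  obtain ⟨δ, hδ, hball⟩ := Metric.eventually_nhds_iff.mp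
    (Metric.tendsto_nhds.mp hg (‖h‖ / 2) (by positivity))
  obtain ⟨K, hK⟩ := exists_nat_one_div_lt hδ
  refine ⟨‖h‖ / (2 * ((K + 1 : ℕ) : ℝ) ^ 2), by positivity, K + 1, by omega, ?_⟩
  intro L hL
  have hLpos : (0 : ℝ) < L := by exact_mod_cast Nat.pos_of_ne_zero hL
  set N := (K + 1) * L with hN
  have hNr : (N : ℝ) = ((K + 1 : ℕ) : ℝ) * L := by rw [hN]; push_cast; ring
  have hsmall : ∀ j : ℕ, j < L → |(j : ℝ) / N| < δ := by
    intro j hj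
    have hj' : (j : ℝ) < L := by exact_mod_cast hj
    rw [abs_of_nonneg (by positivity)]
    refine lt_trans ?_ hK
    rw [hNr, div_lt_div_iff₀ (by positivity) (by positivity)]
    push_cast
    nlinarith [show (0 : ℝ) < (K : ℝ) + 1 by positivity]
  have h1 : ‖∑ p ∈ Finset.range L ×ˢ Finset.range L,
      (g ((p.1 : ℝ) / N) ((p.2 : ℝ) / N) h - h)‖ ≤ (L : ℝ) ^ 2 * (‖h‖ / 2) := by
    refine (norm_sum_le_of_le _ (f := fun p : ℕ × ℕ => g ((p.1 : ℝ) / N) ((p.2 : ℝ) / N) h - h)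
      (n := fun _ => ‖h‖ / 2) ?_).trans ?_
    · rintro ⟨j, k⟩ hjk
      simp only [Finset.mem_product, Finset.mem_range] at hjk
      rw [← dist_eq_norm]
      refine (hball (y := ((j : ℝ) / N, (k : ℝ) / N)) ?_).le
      rw [dist_zero_right, Prod.norm_def]
      exact max_lt (hsmall j hjk.1) (hsmall k hjk.2)
    · simp [sq]
  rw [Finset.sum_sub_distrib, Finset.sum_const, Finset.card_product, Finset.card_range,
    ← Nat.cast_smul_eq_nsmul ℝ] at h1
  have h2 : (L : ℝ) ^ 2 * (‖h‖ / 2)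
      ≤ ‖∑ p ∈ Finset.range L ×ˢ Finset.range L, g ((p.1 : ℝ) / N) ((p.2 : ℝ) / N) h‖ := by
    have e : ‖(((L * L : ℕ) : ℝ)) • h‖ = (L : ℝ) ^ 2 * ‖h‖ := by
      rw [norm_smul, Real.norm_natCast]; push_cast; ring
    have := norm_sub_norm_le (((L * L : ℕ) : ℝ) • h)
      (∑ p ∈ Finset.range L ×ˢ Finset.range L, g ((p.1 : ℝ) / N) ((p.2 : ℝ) / N) h)
    rw [norm_sub_rev, e] at this
    linarith
  have h3 : ‖∑ p ∈ Finset.range L ×ˢ Finset.range L, g ((p.1 : ℝ) / N) ((p.2 : ℝ) / N) h‖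
      ≤ ‖∑ p ∈ Finset.range N ×ˢ Finset.range N, g ((p.1 : ℝ) / N) ((p.2 : ℝ) / N) h‖ := by
    simp only [hh, map_mul, map_star]
    have hLN : L ≤ N := by rw [hN]; nlinarith
    exact norm_sum_mono (Finset.product_subset_product (Finset.range_mono hLN)
      (Finset.range_mono hLN)) (fun p : ℕ × ℕ => g ((p.1 : ℝ) / N) ((p.2 : ℝ) / N) x)
  have hNpos : (0 : ℝ) < N := by rw [hNr]; positivity
  rw [avg, norm_smul, norm_inv, norm_pow, Complex.norm_natCast, inv_mul_eq_div,
    le_div_iff₀ (by positivity)]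
  refine le_trans (le_of_eq ?_) (h2.trans h3)
  rw [hNr]
  field_simp

theorem main_thm {n m : ℕ} (hn : 2 ≤ n) (hm : 2 ≤ m)
    (Θ : Fin n → Fin m → ℂ) (hΘ : ∀ i j, ‖Θ i j‖ = 1)
    (s : Fin n → A) (t : Fin m → A) (hs : CF s) (ht : CF t)
    (hcomm : ∀ (i : Fin n) (j : Fin m), s i * t j = Θ i j • (t j * s i))
    (hgen : (StarAlgebra.adjoin ℂ (Set.range s ∪ Set.range t)).topologicalClosure = ⊤)
    (hgauge : ∀ ζ ξ : ℂ, ‖ζ‖ = 1 → ‖ξ‖ = 1 →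
      ∃ ρ : A ≃⋆ₐ[ℂ] A, (∀ i, ρ (s i) = ζ • s i) ∧ (∀ j, ρ (t j) = ξ • t j))
    (x : A) (hx : x ≠ 0) : ∃ a b : A, a * x * b = 1 := by
  have : Nontrivial A := ⟨x, 0, hx⟩
  have hΘ0 : ∀ i j, Θ i j ≠ 0 := fun i j h => by
    have := hΘ i j
    simp [h] at this
  have hΘi : ∀ j i, (Θ i j)⁻¹ ≠ 0 := fun j i => inv_ne_zero (hΘ0 i j)
  have hcomm' : ∀ (j : Fin m) (i : Fin n), t j * s i = (Θ i j)⁻¹ • (s i * t j) := by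
    intro j i
    rw [hcomm, smul_smul, inv_mul_cancel₀ (hΘ0 i j), one_smul]
  have hqc1 : ∀ a ∈ mon s, ∀ b ∈ mon t, QC a b := fun a ha b hb =>
    QC.closure (qc_gen hs hΘ0 hcomm) ha hb
  have hqc2 : ∀ a ∈ mon s, ∀ b ∈ mon t, QC b a := fun a ha b hb =>
    QC.closure (qc_gen (Θ := fun j i => (Θ i j)⁻¹) ht hΘi hcomm') hb ha
  choose g hgs hgt using fun α β : ℝ => hgauge (ee α) (ee β) (norm_ee α) (norm_ee β)
  obtain ⟨c, hc, K, hK, hlow⟩ := avg_lower (g := g) hx (gauge_tendsto hgs hgt hgen _)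
  set h := star x * x with hh
  have hhsa : IsSelfAdjoint h := IsSelfAdjoint.star_mul_self x
  have hmem : h ∈ closure (StarAlgebra.adjoin ℂ (Set.range s ∪ Set.range t) : Set A) := by
    have : h ∈ (StarAlgebra.adjoin ℂ (Set.range s ∪ Set.range t)).topologicalClosure := by
      rw [hgen]; trivial
    exact this
  obtain ⟨p0, hp0, hhp0⟩ := Metric.mem_closure_iff.mp hmem (c / 3) (by positivity)
  -- symmetrize
  obtain ⟨p, hp, hpsa, hhp⟩ : ∃ p ∈ StarAlgebra.adjoin ℂ (Set.range s ∪ Set.range t),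
      IsSelfAdjoint p ∧ ‖h - p‖ < c / 3 := by
    refine ⟨(1 / 2 : ℂ) • (p0 + star p0), ?_, ?_, ?_⟩
    · exact SMulMemClass.smul_mem _ (add_mem hp0 (star_mem hp0))
    · rw [IsSelfAdjoint, star_smul, star_add, star_star, add_comm]
      simp
    · rw [dist_eq_norm] at hhp0
      have e : h - (1 / 2 : ℂ) • (p0 + star p0) = (1 / 2 : ℂ) • ((h - p0) + star (h - p0)) := by
        rw [star_sub, hhsa.star_eq]
        module
      rw [e, norm_smul]
      have := norm_add_le (h - p0) (star (h - p0))
      rw [norm_star] at this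
      norm_num
      norm_num at this
      linarith
  obtain ⟨N1, hN1⟩ := Filter.eventually_atTop.mp (avg_balanced hs ht hqc2 hgs hgt hp)
  have hLe : N1 ≤ K * (N1 + 1) := by
    have : 1 ≤ K := Nat.one_le_iff_ne_zero.mpr hK
    nlinarith
  have hbal := hN1 _ hLe
  have hlow' := hlow (N1 + 1) (by omega)
  have hNne : K * (N1 + 1) ≠ 0 := by positivity
  generalize K * (N1 + 1) = N at *
  obtain ⟨k, hk⟩ := (balanced_level hs ht hqc1 hbal).exists
  obtain ⟨l, v, hl, hv, hvl, hvmem⟩ := eigen_level hs ht hk (avg_star g N hpsa)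
  have hlc : c / 3 < ‖l‖ := by
    have h1 := avg_norm g N (h - p)
    rw [avg_sub] at h1
    have h2 := norm_sub_norm_le (avg g N h) (avg g N p)
    rw [hl]
    linarith
  have hvhom : Homog g v := by
    intro α β
    refine ⟨ee α ^ k * ee β ^ k, by simp [norm_ee], ?_⟩
    have : ∀ y ∈ Submodule.span ℂ {y : A | ∃ μ ν, μ.length = k ∧ ν.length = k ∧
        y = sw s μ * sw t ν}, g α β y = (ee α ^ k * ee β ^ k) • y := by
      intro y hy
      induction hy using Submodule.span_induction with
      | zero => simp
      | add x y _ _ h1 h2 => rw [map_add, h1, h2, smul_add]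
      | smul c x _ h1 => rw [map_smul, h1, smul_comm]
      | mem y hy =>
        obtain ⟨μ, ν, h1, h2, rfl⟩ := hy
        rw [map_mul, gauge_sw (hgs α β), gauge_sw (hgt α β), smul_mul_smul_comm, h1, h2]
    exact this v hvmem
  have hsmem : ∀ i, s i ∈ StarAlgebra.adjoin ℂ (Set.range s ∪ Set.range t) := fun i =>
    StarAlgebra.subset_adjoin ℂ _ (Or.inl ⟨i, rfl⟩)
  have htmem : ∀ i, t i ∈ StarAlgebra.adjoin ℂ (Set.range s ∪ Set.range t) := fun i =>
    StarAlgebra.subset_adjoin ℂ _ (Or.inr ⟨i, rfl⟩)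
  have hvP : v ∈ StarAlgebra.adjoin ℂ (Set.range s ∪ Set.range t) := by
    have : Submodule.span ℂ {y : A | ∃ μ ν, μ.length = k ∧ ν.length = k ∧
        y = sw s μ * sw t ν} ≤ Subalgebra.toSubmodule
        (StarAlgebra.adjoin ℂ (Set.range s ∪ Set.range t)).toSubalgebra := by
      refine Submodule.span_le.mpr ?_
      rintro _ ⟨μ, ν, -, -, rfl⟩
      have e1 : sw s μ ∈ StarAlgebra.adjoin ℂ (Set.range s ∪ Set.range t) := by
        refine list_prod_mem fun y hy => ?_
        obtain ⟨i, -, rfl⟩ := List.mem_map.mp hy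
        exact hsmem i
      have e2 : sw t ν ∈ StarAlgebra.adjoin ℂ (Set.range s ∪ Set.range t) := by
        refine list_prod_mem fun y hy => ?_
        obtain ⟨i, -, rfl⟩ := List.mem_map.mp hy
        exact htmem i
      have e3 := mul_mem e1 e2
      exact e3
    exact this hvmem
  have hi : (⟨0, by omega⟩ : Fin n) ≠ ⟨1, by omega⟩ := by simp
  have hj : (⟨0, by omega⟩ : Fin m) ≠ ⟨1, by omega⟩ := by simp
  obtain ⟨L, d, hd⟩ := (kill_poly hs ht hqc2 hi hj
    (mul_mem (mul_mem (star_mem hvP) hp) hvP)).exists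
  have hshom : ∀ i, Homog g (s i) := fun i α β => ⟨_, norm_ee α, hgs α β i⟩
  have hthom : ∀ i, Homog g (t i) := fun i α β => ⟨_, norm_ee β, hgt α β i⟩
  have hwhom := (((hshom ⟨0, by omega⟩).pow L).mul (hshom ⟨1, by omega⟩)).mul
    (((hthom ⟨0, by omega⟩).pow L).mul (hthom ⟨1, by omega⟩))
  have hw1 := kill_iso hs (i0 := ⟨0, by omega⟩) (i1 := ⟨1, by omega⟩) L
  have hw2 := kill_iso ht (i0 := ⟨0, by omega⟩) (i1 := ⟨1, by omega⟩) L
  generalize s ⟨0, _⟩ ^ L * s ⟨1, _⟩ = X at hd hwhom hw1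
  generalize t ⟨0, _⟩ ^ L * t ⟨1, _⟩ = Y at hd hwhom hw2
  have hw : star (X * Y) * (X * Y) = 1 := by
    rw [star_mul, mul_assoc, ← mul_assoc (star X), hw1, one_mul, hw2]
  generalize X * Y = w at hd hwhom hw
  have hdl : d • (1 : A) = l • 1 := by
    have := congrArg (avg g N) hd
    rw [avg_conj N hwhom, avg_conj N hvhom, hvl, avg_one g hNne, mul_smul_comm, mul_one,
      smul_mul_assoc, hw] at this
    exact this.symm
  rw [hdl] at hd
  set u := v * w with hu
  have huu : star u * u = 1 := by
    rw [hu, star_mul, mul_assoc, ← mul_assoc (star v), hv, one_mul, hw]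
  have hup : star u * p * u = l • (1 : A) := by
    rw [← hd, hu, star_mul]; noncomm_ring
  have hunorm : ‖u‖ = 1 := by
    have := CStarRing.norm_star_mul_self (x := u)
    rw [huu, norm_one] at this
    nlinarith [norm_nonneg u]
  have hl0 : 0 < ‖l‖ := by linarith
  have hdist : ‖l⁻¹ • (star u * (p - h) * u)‖ < 1 := by
    have h1 : ‖star u * (p - h) * u‖ ≤ ‖p - h‖ := by
      have e1 := norm_mul_le (star u * (p - h)) u
      have e2 := norm_mul_le (star u) (p - h)
      rw [hunorm, mul_one] at e1
      rw [norm_star, hunorm, one_mul] at e2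
      exact e1.trans e2
    rw [norm_sub_rev] at h1
    rw [norm_smul, norm_inv, inv_mul_lt_iff₀ hl0]
    linarith
  have hlne : l ≠ 0 := norm_pos_iff.mp hl0
  have hunit : IsUnit (l⁻¹ • (star u * h * u)) := by
    have : l⁻¹ • (star u * h * u) = 1 - l⁻¹ • (star u * (p - h) * u) := by
      rw [mul_sub, sub_mul, hup, smul_sub, smul_smul, inv_mul_cancel₀ hlne, one_smul, sub_sub_cancel]
    rw [this]
    exact ⟨Units.oneSub _ hdist, rfl⟩
  obtain ⟨b, hb⟩ := hunit.exists_left_inv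
  refine ⟨b * (l⁻¹ • (star u * star x)), u, ?_⟩
  rw [← hb, hh, mul_assoc, mul_assoc b, smul_mul_assoc]
  congr 2
  noncomm_ring

end CStar

theorem stmt_18 {A : Type*} [NormedRing A] [StarRing A] [CStarRing A]
    [NormedAlgebra ℂ A] [StarModule ℂ A] [CompleteSpace A]
    {n m : ℕ} (hn : 2 ≤ n) (hm : 2 ≤ m)
    (Θ : Fin n → Fin m → ℂ) (hΘ : ∀ i j, ‖Θ i j‖ = 1)
    (s : Fin n → A) (t : Fin m → A)
    (hs : ∀ i j : Fin n, star (s i) * s j = if i = j then 1 else 0)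
    (ht : ∀ r l : Fin m, star (t r) * t l = if r = l then 1 else 0)
    (hQ : ∑ i : Fin n, s i * star (s i) = 1)
    (hP : ∑ j : Fin m, t j * star (t j) = 1)
    (hcomm : ∀ (i : Fin n) (j : Fin m), s i * t j = Θ i j • (t j * s i))
    (hgen : (StarAlgebra.adjoin ℂ (Set.range s ∪ Set.range t)).topologicalClosure = ⊤)
    (hgauge : ∀ ζ ξ : ℂ, ‖ζ‖ = 1 → ‖ξ‖ = 1 →
      ∃ ρ : A ≃⋆ₐ[ℂ] A, (∀ i, ρ (s i) = ζ • s i) ∧ (∀ j, ρ (t j) = ξ • t j)) :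
    ∀ x : A, x ≠ 0 → ∃ a b : A, a * x * b = 1 := by
  let : CStarAlgebra A := { }
  exact main_thm hn hm Θ hΘ s t ⟨hs, hQ⟩ ⟨ht, hP⟩ hcomm hgen hgauge
end
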